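/- arXiv:2401.03204 — 2 statements merged into one kernel-verified Lean document; each statement's English description precedes it below -/
import Mathlib

section
/- Part (8) of Lemma 5: 4·(2 + η₁ + 2η₀ + 3η₃)·(2 + η₃ + 2η₂ + 3η₁) ≡ −2(1−4y)·H + 5p + 1 (mod (4^p − 1)/3). -/
open Finset

/-- The cyclotomic class `D_i` of order 4 modulo `p` with respect to the
primitive root `θ`: `{θ^(i+4j) mod p : 0 ≤ j < (p-1)/4}`. -/
def cycD (p θ i : ℕ) : Finset ℕ :=
  (Finset.range ((p - 1) / 4)).image fun j => θ ^ (i + 4 * j) % p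

/-- `η_i = Σ_{t ∈ D_i} 4^t` as an integer. -/
def eta4 (p θ : ℕ) (i : ℕ) : ℤ := ∑ t ∈ cycD p θ i, (4 : ℤ) ^ t

/-- `H = η₀ + η₂ − η₁ − η₃`. -/
def Hval (p θ : ℕ) : ℤ := eta4 p θ 0 + eta4 p θ 2 - eta4 p θ 1 - eta4 p θ 3


lemma sum4 {R : Type*} [AddCommMonoid R] (f : ZMod 4 → R) :
    ∑ i, f i = f 0 + f 1 + f 2 + f 3 := Fin.sum_univ_four f

lemma forall4 {P : ZMod 4 → Prop} (h0 : P 0) (h1 : P 1) (h2 : P 2) (h3 : P 3) : ∀ i, P i := by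
  intro i
  fin_cases i
  exacts [h0, h1, h2, h3]

/-- cyclotomic numbers attached to a class function -/
def nn (p : ℕ) [NeZero p] (cls : ZMod p → ZMod 4) (i j : ZMod 4) : ℕ :=
  (univ.filter fun v : ZMod p => (v ≠ 0 ∧ v + 1 ≠ 0) ∧ cls v = i ∧ cls (v + 1) = j).card

lemma nn_sum (p : ℕ) [NeZero p] (cls : ZMod p → ZMod 4) {R : Type*} [CommRing R]
    (F : ZMod 4 → ZMod 4 → R) :
    ∑ v ∈ univ.filter (fun v : ZMod p => v ≠ 0 ∧ v + 1 ≠ 0), F (cls v) (cls (v + 1))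
      = ∑ i, ∑ j, (nn p cls i j : R) * F i j := by
  have h : ∀ v : ZMod p, F (cls v) (cls (v + 1)) =
      ∑ i, ∑ j, (if cls v = i ∧ cls (v + 1) = j then (1 : R) else 0) * F i j := by
    intro v
    simp [ite_and]
  rw [Finset.sum_congr rfl (fun v _ => h v), Finset.sum_comm]
  refine Finset.sum_congr rfl fun i _ => ?_
  rw [Finset.sum_comm]
  refine Finset.sum_congr rfl fun j _ => ?_
  rw [← Finset.sum_mul]
  congr 1
  rw [Finset.sum_boole, Finset.filter_filter]
  rfl

section
variable (p : ℕ) [Fact p.Prime] (cls : ZMod p → ZMod 4)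

lemma cls_one (hmul : ∀ a b, a ≠ 0 → b ≠ 0 → cls (a * b) = cls a + cls b) : cls 1 = 0 := by
  have := hmul 1 1 one_ne_zero one_ne_zero
  simpa using this

lemma cls_inv (hmul : ∀ a b, a ≠ 0 → b ≠ 0 → cls (a * b) = cls a + cls b)
    (a : ZMod p) (ha : a ≠ 0) : cls a⁻¹ = - cls a := by
  have := hmul a a⁻¹ ha (inv_ne_zero ha)
  rw [mul_inv_cancel₀ ha, cls_one p cls hmul] at this
  exact eq_neg_of_add_eq_zero_right this.symm

lemma cls_neg (hmul : ∀ a b, a ≠ 0 → b ≠ 0 → cls (a * b) = cls a + cls b)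
    (hneg : cls (-1) = 2)
    (a : ZMod p) (ha : a ≠ 0) : cls (-a) = cls a + 2 := by
  have := hmul a (-1) ha (by simp)
  rw [← hneg, ← this]; simp

lemma nn_symm1 (hmul : ∀ a b, a ≠ 0 → b ≠ 0 → cls (a * b) = cls a + cls b) (i j : ZMod 4) :
    nn p cls i j = nn p cls (-i) (j - i) := by
  have key : ∀ v : ZMod p, v ≠ 0 → v⁻¹ + 1 = (v + 1) * v⁻¹ := by
    intro v hv; field_simp; ring
  refine Finset.card_bij' (fun v _ => v⁻¹) (fun v _ => v⁻¹) ?_ ?_ ?_ ?_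
  · intro v hv
    simp only [mem_filter, mem_univ, true_and] at hv ⊢
    obtain ⟨⟨h1, h2⟩, h3, h4⟩ := hv
    rw [key v h1, hmul _ _ h2 (inv_ne_zero h1), cls_inv p cls hmul v h1, h3, h4]
    exact ⟨⟨inv_ne_zero h1, mul_ne_zero h2 (inv_ne_zero h1)⟩, rfl, by ring⟩
  · intro v hv
    simp only [mem_filter, mem_univ, true_and] at hv ⊢
    obtain ⟨⟨h1, h2⟩, h3, h4⟩ := hv
    rw [key v h1, hmul _ _ h2 (inv_ne_zero h1), cls_inv p cls hmul v h1, h3, h4]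
    exact ⟨⟨inv_ne_zero h1, mul_ne_zero h2 (inv_ne_zero h1)⟩, by ring, by ring⟩
  · intro v _; simp
  · intro v _; simp

lemma four0 (i : ZMod 4) : i + 2 + 2 = i := by revert i; decide

lemma nn_symm2 (hmul : ∀ a b, a ≠ 0 → b ≠ 0 → cls (a * b) = cls a + cls b)
    (hneg : cls (-1) = 2) (i j : ZMod 4) :
    nn p cls i j = nn p cls (j + 2) (i + 2) := by
  have key : ∀ v : ZMod p, -(v + 1) + 1 = -v := by
    intro v; ring
  refine Finset.card_bij' (fun v _ => -(v + 1)) (fun v _ => -(v + 1)) ?_ ?_ ?_ ?_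
  · intro v hv
    simp only [mem_filter, mem_univ, true_and] at hv ⊢
    obtain ⟨⟨h1, h2⟩, h3, h4⟩ := hv
    rw [key v, cls_neg p cls hmul hneg v h1, cls_neg p cls hmul hneg _ h2, h3, h4]
    exact ⟨⟨neg_ne_zero.2 h2, neg_ne_zero.2 h1⟩, rfl, rfl⟩
  · intro v hv
    simp only [mem_filter, mem_univ, true_and] at hv ⊢
    obtain ⟨⟨h1, h2⟩, h3, h4⟩ := hv
    rw [key v, cls_neg p cls hmul hneg v h1, cls_neg p cls hmul hneg _ h2, h3, h4]
    exact ⟨⟨neg_ne_zero.2 h2, neg_ne_zero.2 h1⟩, four0 _, four0 _⟩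
  · intro v _; simp
  · intro v _; simp

lemma nn_row (f : ℕ) (hneg : cls (-1) = 2)
    (hc : ∀ i, (univ.filter fun v : ZMod p => v ≠ 0 ∧ cls v = i).card = f) (i : ZMod 4) :
    nn p cls i 0 + nn p cls i 1 + nn p cls i 2 + nn p cls i 3 + (if i = 2 then 1 else 0) = f := by
  rw [← hc i, ← sum4 (fun j => nn p cls i j)]
  have h1 : ∑ j, nn p cls i j =
      (univ.filter fun v : ZMod p => (v ≠ 0 ∧ v + 1 ≠ 0) ∧ cls v = i).card := by
    rw [Finset.card_eq_sum_card_fiberwise (f := fun v => cls (v + 1)) (t := univ)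
      (fun _ _ => by simp)]
    refine Finset.sum_congr rfl fun j _ => ?_
    rw [Finset.filter_filter]
    simp only [nn, and_assoc]
  have h2 : (if i = 2 then 1 else 0) =
      (univ.filter fun v : ZMod p => v = -1 ∧ cls v = i).card := by
    split_ifs with h
    · symm
      rw [Finset.card_eq_one]
      refine ⟨-1, ?_⟩
      ext v
      simp only [mem_filter, mem_univ, true_and, mem_singleton]
      constructor
      · exact fun h => h.1
      · rintro rfl; exact ⟨rfl, by rw [hneg, h]⟩
    · symm
      rw [Finset.card_eq_zero, Finset.filter_eq_empty_iff]
      rintro v - ⟨rfl, h'⟩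
      exact h (by rw [← h', hneg])
  rw [h1, h2, ← Finset.card_union_of_disjoint]
  · congr 1
    ext v
    simp only [mem_filter, mem_univ, true_and, mem_union]
    constructor
    · rintro (⟨⟨h1, h2⟩, h3⟩ | ⟨rfl, h3⟩)
      · exact ⟨h1, h3⟩
      · exact ⟨by simp, h3⟩
    · rintro ⟨h1, h3⟩
      by_cases h : v = -1
      · exact Or.inr ⟨h, h3⟩
      · exact Or.inl ⟨⟨h1, fun h' => h (eq_neg_of_add_eq_zero_left h')⟩, h3⟩
  · rw [Finset.disjoint_filter]
    rintro v - ⟨⟨_, h2⟩, _⟩ ⟨rfl, _⟩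
    simp at h2

/-- I^k -/
noncomputable def ee (k : ZMod 4) : ℂ := Complex.I ^ k.val

lemma ee0 : ee 0 = 1 := by simp [ee]
lemma ee1 : ee 1 = Complex.I := by
  have : (1 : ZMod 4).val = 1 := rfl
  simp [ee, this]
lemma ee2 : ee 2 = -1 := by
  have : (2 : ZMod 4).val = 2 := rfl
  simp [ee, this]
lemma ee3 : ee 3 = -Complex.I := by
  have : (3 : ZMod 4).val = 3 := rfl
  simp [ee, this, Complex.I_pow_three]

lemma ee_add (a b : ZMod 4) : ee (a + b) = ee a * ee b := by
  rw [ee, ee, ee, ← pow_add, ZMod.val_add, ← Complex.I_pow_eq_pow_mod]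

/-- the characters -/
noncomputable def chi (hmul : ∀ a b, a ≠ 0 → b ≠ 0 → cls (a * b) = cls a + cls b) (m : ZMod 4) :
    MulChar (ZMod p) ℂ where
  toFun x := if x = 0 then 0 else ee (m * cls x)
  map_one' := by simp [cls_one p cls hmul, ee0]
  map_mul' := by
    intro a b
    by_cases ha : a = 0
    · simp [ha]
    by_cases hb : b = 0
    · simp [hb]
    simp [ha, hb, hmul a b ha hb, mul_add, ee_add]
  map_nonunit' := by
    intro a ha
    have : a = 0 := by simpa using ha
    simp [this]

lemma chi_apply (hmul : ∀ a b, a ≠ 0 → b ≠ 0 → cls (a * b) = cls a + cls b) (m : ZMod 4)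
    (x : ZMod p) : chi p cls hmul m x = if x = 0 then 0 else ee (m * cls x) := rfl

lemma chi_mul (hmul : ∀ a b, a ≠ 0 → b ≠ 0 → cls (a * b) = cls a + cls b) (m n : ZMod 4) :
    chi p cls hmul m * chi p cls hmul n = chi p cls hmul (m + n) := by
  ext x
  simp [chi_apply, add_mul, ee_add]

lemma chi_zero (hmul : ∀ a b, a ≠ 0 → b ≠ 0 → cls (a * b) = cls a + cls b) :
    chi p cls hmul 0 = 1 := by
  ext x
  simp [chi_apply, ee0]

lemma chi_jac (hmul : ∀ a b, a ≠ 0 → b ≠ 0 → cls (a * b) = cls a + cls b)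
    (hneg : cls (-1) = 2) (m n : ZMod 4) :
    jacobiSum (chi p cls hmul m) (chi p cls hmul n) =
      ∑ i, ∑ j, (nn p cls i j : ℂ) * (ee (m * (i + 2)) * ee (n * j)) := by
  rw [← nn_sum p cls (fun i j => ee (m * (i + 2)) * ee (n * j)), jacobiSum,
    ← Equiv.sum_comp (Equiv.neg (ZMod p)), Finset.sum_filter]
  refine Finset.sum_congr rfl fun v _ => ?_
  simp only [Equiv.neg_apply, chi_apply, sub_neg_eq_add, neg_eq_zero, add_comm (1 : ZMod p)]
  by_cases h1 : v = 0
  · simp [h1]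
  by_cases h2 : v + 1 = 0
  · simp [h2]
  simp [h1, h2, cls_neg p cls hmul hneg v h1]

lemma quad (hmul : ∀ a b, a ≠ 0 → b ≠ 0 → cls (a * b) = cls a + cls b)
    (hneg : cls (-1) = 2) (g : ZMod p) (hg0 : g ≠ 0) (hg : cls g = 1) :
    (∑ i, ∑ j, (nn p cls i j : ℂ) * (ee (1 * (i + 2)) * ee (2 * j))) *
    (∑ i, ∑ j, (nn p cls i j : ℂ) * (ee (3 * (i + 2)) * ee (2 * j))) = p := by
  have hne : ∀ m : ZMod 4, ee m ≠ 1 → chi p cls hmul m ≠ 1 := by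
    intro m hm h
    apply hm
    have h2 := congrArg (fun c : MulChar (ZMod p) ℂ => c g) h
    simpa [chi_apply, hg0, hg, MulChar.one_apply (isUnit_iff_ne_zero.2 hg0)] using h2
  have e1 : ee 1 ≠ 1 := by
    rw [ee1]; intro h; simpa using congrArg Complex.re h
  have e3 : ee 3 ≠ 1 := by
    rw [ee3]; intro h; simpa using congrArg Complex.re h
  have e2 : ee 2 ≠ 1 := by
    rw [ee2]; norm_num
  have hi1 : (chi p cls hmul 1)⁻¹ = chi p cls hmul 3 := by
    rw [inv_eq_iff_mul_eq_one, chi_mul]; exact chi_zero p cls hmul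
  have hi2 : (chi p cls hmul 2)⁻¹ = chi p cls hmul 2 := by
    rw [inv_eq_iff_mul_eq_one, chi_mul]; exact chi_zero p cls hmul
  have := jacobiSum_mul_jacobiSum_inv (F := ZMod p) (F' := ℂ) (χ := chi p cls hmul 1)
    (φ := chi p cls hmul 2) ?_ (hne 1 e1) (hne 2 e2) ?_
  · rw [hi1, hi2, chi_jac p cls hmul hneg, chi_jac p cls hmul hneg, ZMod.card] at this
    exact this
  · rw [ZMod.ringChar_zmod_n, ringChar.eq_zero]
    exact (Fact.out : p.Prime).ne_zero.symm
  · rw [chi_mul]; exact hne 3 e3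

lemma uniq (p : ℕ) (hp : p.Prime) (x y X Y : ℤ) (h1 : (p : ℤ) = x ^ 2 + 4 * y ^ 2)
    (h2 : (p : ℤ) = X ^ 2 + 4 * Y ^ 2) (hx : x % 4 = 1) (hX : X % 4 = 1) : x = X := by
  have hP : Prime (p : ℤ) := Nat.prime_iff_prime_int.1 hp
  have hpos : (0 : ℤ) < p := by exact_mod_cast hp.pos
  have key : (x * Y - X * y) * (x * Y + X * y) = p * (Y ^ 2 - y ^ 2) := by
    have e1 : x ^ 2 = p - 4 * y ^ 2 := by linarith
    have e2 : X ^ 2 = p - 4 * Y ^ 2 := by linarith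
    linear_combination Y ^ 2 * e1 - y ^ 2 * e2
  have small : ∀ a b : ℤ, a ^ 2 + 4 * b ^ 2 = (p : ℤ) ^ 2 → (p : ℤ) ∣ b → b = 0 := by
    rintro a b hab ⟨k, rfl⟩
    by_contra hk
    have hk0 : k ≠ 0 := by rintro rfl; simp at hk
    have : 1 ≤ k ^ 2 := by have := sq_pos_of_ne_zero hk0; linarith
    nlinarith [sq_nonneg a, mul_pos hpos hpos]
  have hz : (x * Y - X * y) * (x * Y + X * y) = 0 := by
    rcases hP.dvd_or_dvd (Dvd.intro _ key.symm) with h | h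
    · rw [small (x * X + 4 * y * Y) _ (by rw [sq (p : ℤ)]; nth_rw 1 [h1]; rw [h2]; ring) h, zero_mul]
    · rw [small (x * X - 4 * y * Y) _ (by rw [sq (p : ℤ)]; nth_rw 1 [h1]; rw [h2]; ring) h, mul_zero]
  rw [hz] at key
  have h3 : Y ^ 2 - y ^ 2 = 0 := by
    rcases mul_eq_zero.1 key.symm with h | h
    · exact absurd h hpos.ne'
    · exact h
  have h4 : x ^ 2 = X ^ 2 := by linarith
  rcases sq_eq_sq_iff_eq_or_eq_neg.1 h4 with h | h
  · exact h
  · omega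
end

/-- the weights -/
def gg (k : ZMod 4) : ℤ := if k = 0 then 2 else if k = 1 then 1 else if k = 2 then 0 else 3

/-- the signs -/
def sg (k : ZMod 4) : ℤ := if k = 0 then 1 else if k = 1 then -1 else if k = 2 then 1 else -1

section
variable (p : ℕ) [Fact p.Prime] (cls : ZMod p → ZMod 4)

lemma values (f : ℕ) (hpf : p = 4 * f + 1) (hp8 : p % 8 = 5)
    (hmul : ∀ a b, a ≠ 0 → b ≠ 0 → cls (a * b) = cls a + cls b)
    (hneg : cls (-1) = 2) (g : ZMod p) (hg0 : g ≠ 0) (hg : cls g = 1)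
    (hc : ∀ i, (univ.filter fun v : ZMod p => v ≠ 0 ∧ cls v = i).card = f)
    (x y : ℤ) (hx : x % 4 = 1) (hxy : (p : ℤ) = x ^ 2 + 4 * y ^ 2)
    (hy : 16 * (nn p cls 0 1 : ℤ) = (p : ℤ) + 1 + 2 * x - 8 * y) (k : ZMod 4) :
    4 * (2 * gg k + 2 * gg (k + 2) + ∑ i, ∑ j, (nn p cls i j : ℤ) * (gg (k + i) * gg (k + j)))
      = 9 * p + 1 - 2 * (1 - 4 * y) * sg k := by
  have q1 : nn p cls 2 2 = nn p cls 0 0 := (nn_symm2 p cls hmul hneg 0 0).symm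
  have q2 : nn p cls 2 0 = nn p cls 0 0 := (nn_symm1 p cls hmul 2 0).trans q1
  have q3 : nn p cls 3 2 = nn p cls 0 1 := (nn_symm2 p cls hmul hneg 0 1).symm
  have q4 : nn p cls 1 3 = nn p cls 0 1 := (nn_symm1 p cls hmul 3 2).symm.trans q3
  have q5 : nn p cls 1 2 = nn p cls 0 3 := (nn_symm2 p cls hmul hneg 0 3).symm
  have q6 : nn p cls 3 1 = nn p cls 0 3 := (nn_symm1 p cls hmul 1 2).symm.trans q5
  have q7 : nn p cls 3 3 = nn p cls 1 0 := (nn_symm1 p cls hmul 1 0).symm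
  have q8 : nn p cls 1 1 = nn p cls 1 0 := (nn_symm2 p cls hmul hneg 3 3).symm.trans q7
  have q9 : nn p cls 3 0 = nn p cls 1 0 := (nn_symm1 p cls hmul 1 1).symm.trans q8
  have q10 : nn p cls 2 1 = nn p cls 1 0 := (nn_symm2 p cls hmul hneg 3 0).symm.trans q9
  have q11 : nn p cls 2 3 = nn p cls 1 0 := (nn_symm1 p cls hmul 2 1).symm.trans q10
  have r0 := nn_row p cls f hneg hc 0
  have r1 := nn_row p cls f hneg hc 1
  have r2 := nn_row p cls f hneg hc 2
  rw [if_neg (by decide)] at r0 r1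
  rw [if_pos rfl] at r2
  have hq := quad p cls hmul hneg g hg0 hg
  simp only [sum4,
    show ee (1 * (0 + 2)) = -1 from ee2, show ee (1 * (1 + 2)) = -Complex.I from ee3,
    show ee (1 * (2 + 2)) = 1 from ee0, show ee (1 * (3 + 2)) = Complex.I from ee1,
    show ee (3 * (0 + 2)) = -1 from ee2, show ee (3 * (1 + 2)) = Complex.I from ee1,
    show ee (3 * (2 + 2)) = 1 from ee0, show ee (3 * (3 + 2)) = -Complex.I from ee3,
    show ee (2 * 0) = 1 from ee0, show ee (2 * 1) = -1 from ee2,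
    show ee (2 * 2) = 1 from ee0, show ee (2 * 3) = -1 from ee2,
    q1, q2, q3, q4, q5, q6, q7, q8, q9, q10, q11] at hq
  simp only [sum4, q1, q2, q3, q4, q5, q6, q7, q8, q9, q10, q11] at r0 r1 r2 ⊢
  clear q1 q2 q3 q4 q5 q6 q7 q8 q9 q10 q11
  generalize nn p cls 0 0 = A at *
  generalize nn p cls 0 1 = B at *
  generalize nn p cls 0 2 = D at *
  generalize nn p cls 0 3 = C at *
  generalize nn p cls 1 0 = E at *
  have hQ : (p : ℤ) = ((A : ℤ) + B + C - D - 2 * E) ^ 2 + 4 * ((C : ℤ) - B) ^ 2 := by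
    have : (p : ℂ) = ((A : ℂ) + B + C - D - 2 * E) ^ 2 + 4 * ((C : ℂ) - B) ^ 2 := by
      rw [← hq]
      linear_combination (-4 * ((C : ℂ) - B) ^ 2) * Complex.I_sq
    exact_mod_cast this
  have hX := uniq p Fact.out x y _ _ hxy hQ hx (by omega)
  have hY : y = (C : ℤ) - B := by omega
  revert k
  refine forall4 ?_ ?_ ?_ ?_ <;>
  simp only [show gg 0 = 2 from rfl, show gg 1 = 1 from rfl, show gg 2 = 0 from rfl,
    show gg 3 = 3 from rfl, show sg 0 = 1 from rfl, show sg 1 = -1 from rfl,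
    show sg 2 = 1 from rfl, show sg 3 = -1 from rfl,
    show gg (0 + 0) = 2 from rfl, show gg (0 + 1) = 1 from rfl, show gg (0 + 2) = 0 from rfl,
    show gg (0 + 3) = 3 from rfl,
    show gg (1 + 0) = 1 from rfl, show gg (1 + 1) = 0 from rfl, show gg (1 + 2) = 3 from rfl,
    show gg (1 + 3) = 2 from rfl,
    show gg (2 + 0) = 0 from rfl, show gg (2 + 1) = 3 from rfl, show gg (2 + 2) = 2 from rfl,
    show gg (2 + 3) = 1 from rfl,
    show gg (3 + 0) = 3 from rfl, show gg (3 + 1) = 2 from rfl, show gg (3 + 2) = 1 from rfl,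
    show gg (3 + 3) = 0 from rfl] <;> omega

lemma gen {R : Type*} [CommRing R] (ζ : ZMod p → R) (a : R) (h : ZMod 4 → R) :
    ∑ t, (if t = 0 then a else h (cls t)) * ζ t = a * ζ 0 +
      ∑ i, h i * ∑ t ∈ univ.filter (fun v : ZMod p => v ≠ 0 ∧ cls v = i), ζ t := by
  have h1 : ∀ t : ZMod p, (if t = 0 then a else h (cls t)) * ζ t =
      (if t = 0 then a * ζ t else 0) +
        ∑ i, h i * (if t ≠ 0 ∧ cls t = i then ζ t else 0) := by
    intro t
    by_cases ht : t = 0 <;> simp [ht]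
  rw [Finset.sum_congr rfl fun t _ => h1 t, Finset.sum_add_distrib, Finset.sum_comm]
  simp only [← Finset.mul_sum, ← Finset.sum_filter]
  congr 1
  simp [Finset.sum_filter]

/-- weight function on ZMod p -/
def FF (t : ZMod p) : ℤ := if t = 0 then 2 else gg (cls t)

lemma corr (f : ℕ) (hpf : p = 4 * f + 1) (hp8 : p % 8 = 5)
    (hmul : ∀ a b, a ≠ 0 → b ≠ 0 → cls (a * b) = cls a + cls b)
    (hneg : cls (-1) = 2) (g : ZMod p) (hg0 : g ≠ 0) (hg : cls g = 1)
    (hc : ∀ i, (univ.filter fun v : ZMod p => v ≠ 0 ∧ cls v = i).card = f)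
    (x y : ℤ) (hx : x % 4 = 1) (hxy : (p : ℤ) = x ^ 2 + 4 * y ^ 2)
    (hy : 16 * (nn p cls 0 1 : ℤ) = (p : ℤ) + 1 + 2 * x - 8 * y) (s : ZMod p) :
    4 * ∑ w, FF p cls (s + w) * FF p cls w =
      if s = 0 then (14 * p + 2 : ℤ) else 9 * p + 1 - 2 * (1 - 4 * y) * sg (cls s) := by
  split_ifs with hs
  · subst hs
    have h1 : ∀ w, FF p cls (0 + w) * FF p cls w =
        (if w = 0 then 4 else (gg (cls w)) ^ 2) * (fun _ => (1 : ℤ)) w := by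
      intro w
      by_cases hw : w = 0 <;> simp [FF, hw, sq]
    rw [Finset.sum_congr rfl fun w _ => h1 w, gen p cls (fun _ => (1 : ℤ)) 4 (fun k => gg k ^ 2)]
    simp only [Finset.sum_const, hc, sum4, show gg 0 = 2 from rfl, show gg 1 = 1 from rfl,
      show gg 2 = 0 from rfl, show gg 3 = 3 from rfl, nsmul_eq_mul]
    rw [hpf]; push_cast; ring
  · rw [← values p cls f hpf hp8 hmul hneg g hg0 hg hc x y hx hxy hy (cls s),
      ← nn_sum p cls (fun i j => gg (cls s + i) * gg (cls s + j)), 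
      ← Equiv.sum_comp (Equiv.mulLeft₀ s hs), Finset.sum_filter]
    congr 1
    have h1 : ∀ v, FF p cls (s + s * v) * FF p cls (s * v) =
        (if v = 0 then 2 * gg (cls s) else 0) + (if v = -1 then 2 * gg (cls s + 2) else 0) +
        (if v ≠ 0 ∧ v + 1 ≠ 0 then gg (cls s + cls v) * gg (cls s + cls (v + 1)) else 0) := by
      intro v
      rw [show s + s * v = s * (v + 1) by ring]
      by_cases hv : v = 0
      · simp [hv, FF, hs, mul_comm]
      by_cases hv' : v = -1
      · simp [hv', FF, hs, cls_neg p cls hmul hneg s hs]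
      have hv1 : v + 1 ≠ 0 := fun h => hv' (eq_neg_of_add_eq_zero_left h)
      simp [FF, hv, hv', hv1, hs, hmul s _ hs hv, hmul s _ hs hv1, mul_comm]
    change ∑ v, FF p cls (s + s * v) * FF p cls (s * v) = _
    rw [Finset.sum_congr rfl fun w _ => h1 w, Finset.sum_add_distrib, Finset.sum_add_distrib]
    simp

lemma mainR (f : ℕ) (hpf : p = 4 * f + 1) (hp8 : p % 8 = 5)
    (hmul : ∀ a b, a ≠ 0 → b ≠ 0 → cls (a * b) = cls a + cls b)
    (hneg : cls (-1) = 2) (g : ZMod p) (hg0 : g ≠ 0) (hg : cls g = 1)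
    (hc : ∀ i, (univ.filter fun v : ZMod p => v ≠ 0 ∧ cls v = i).card = f)
    (x y : ℤ) (hx : x % 4 = 1) (hxy : (p : ℤ) = x ^ 2 + 4 * y ^ 2)
    (hy : 16 * (nn p cls 0 1 : ℤ) = (p : ℤ) + 1 + 2 * x - 8 * y)
    {R : Type*} [CommRing R] (ζ : ZMod p → R) (h0 : ζ 0 = 1) (hadd : ∀ a b, ζ (a + b) = ζ a * ζ b)
    (hsum : ∑ t, ζ t = 0) (E : ZMod 4 → R)
    (hE : ∀ i, E i = ∑ t ∈ univ.filter (fun v : ZMod p => v ≠ 0 ∧ cls v = i), ζ t) :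
    4 * (2 + E 1 + 2 * E 0 + 3 * E 3) * (2 + E 3 + 2 * E 2 + 3 * E 1) =
      -2 * (1 - 4 * (y : R)) * (E 0 + E 2 - E 1 - E 3) + 5 * (p : R) + 1 := by
  have hA : ∑ t, (FF p cls t : R) * ζ t = 2 + E 1 + 2 * E 0 + 3 * E 3 := by
    have := gen p cls ζ 2 (fun k => (gg k : R))
    simp only [← hE, sum4, show gg 0 = 2 from rfl, show gg 1 = 1 from rfl,
      show gg 2 = 0 from rfl, show gg 3 = 3 from rfl, h0] at this
    push_cast at this
    simp only [FF]
    push_cast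
    rw [this]; ring
  have hB : ∑ t, (FF p cls (-t) : R) * ζ t = 2 + E 3 + 2 * E 2 + 3 * E 1 := by
    have := gen p cls ζ 2 (fun k => (gg (k + 2) : R))
    simp only [← hE, sum4, show gg (0 + 2) = 0 from rfl, show gg (1 + 2) = 3 from rfl,
      show gg (2 + 2) = 2 from rfl, show gg (3 + 2) = 1 from rfl, h0] at this
    push_cast at this
    have h2 : ∀ t : ZMod p, (FF p cls (-t) : R) = if t = 0 then 2 else (gg (cls t + 2) : R) := by
      intro t
      by_cases ht : t = 0
      · simp [FF, ht]
      · simp [FF, ht, cls_neg p cls hmul hneg t ht]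
    rw [Finset.sum_congr rfl fun t _ => by rw [h2 t], this]; ring
  have hS : 1 + E 0 + E 1 + E 2 + E 3 = 0 := by
    have := gen p cls ζ 1 (fun k => (1 : R))
    simp only [← hE, sum4, h0, ite_self, one_mul, hsum] at this
    rw [this]; ring
  have hAB : 4 * ((∑ t, (FF p cls t : R) * ζ t) * (∑ t, (FF p cls (-t) : R) * ζ t)) =
      ∑ s, (if s = 0 then (14 * p + 2 : R) else 9 * p + 1 - 2 * (1 - 4 * (y : R)) * (sg (cls s) : R)) * ζ s := by
    rw [Finset.sum_mul_sum, Finset.sum_comm]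
    have h3 : ∀ r : ZMod p, ∑ t, (FF p cls t : R) * ζ t * ((FF p cls (-r) : R) * ζ r) =
        ∑ s, (FF p cls (s + -r) : R) * (FF p cls (-r) : R) * ζ s := by
      intro r
      rw [← Equiv.sum_comp (Equiv.addRight (-r))]
      refine Finset.sum_congr rfl fun s _ => ?_
      simp only [Equiv.coe_addRight]
      have : ζ s = ζ (s + -r) * ζ r := by rw [← hadd]; congr 1; ring
      rw [this]; ring
    rw [Finset.sum_congr rfl fun r _ => h3 r, Finset.sum_comm, Finset.mul_sum]
    refine Finset.sum_congr rfl fun s _ => ?_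
    rw [← Finset.sum_mul, ← mul_assoc]
    congr 1
    have h4 := corr p cls f hpf hp8 hmul hneg g hg0 hg hc x y hx hxy hy s
    have h5 := congrArg (Int.cast : ℤ → R) h4
    push_cast at h5
    rw [← h5, ← Equiv.sum_comp (Equiv.neg (ZMod p))]
    simp
  rw [gen p cls ζ _ (fun k => (9 * p + 1 - 2 * (1 - 4 * (y : R)) * (sg k : R))), hA, hB] at hAB
  simp only [← hE, sum4, h0, show sg 0 = 1 from rfl, show sg 1 = -1 from rfl,
    show sg 2 = 1 from rfl, show sg 3 = -1 from rfl] at hAB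
  push_cast at hAB
  linear_combination hAB + (9 * (p : R) + 1) * hS
end

open Classical in
/-- discrete logarithm mod 4 -/
noncomputable def dlog (p θ : ℕ) (t : ZMod p) : ZMod 4 :=
  if h : ∃ k : ℕ, (θ : ZMod p) ^ k = t then ((h.choose : ℕ) : ZMod 4) else 0

lemma dlog_pow (p θ : ℕ) (hpos : 0 < p - 1) (h4 : 4 ∣ p - 1) (hθ : IsPrimitiveRoot (θ : ZMod p) (p - 1)) (k : ℕ) :
    dlog p θ ((θ : ZMod p) ^ k) = k := by
  have h : ∃ k' : ℕ, (θ : ZMod p) ^ k' = (θ : ZMod p) ^ k := ⟨k, rfl⟩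
  rw [dlog, dif_pos h, ZMod.natCast_eq_natCast_iff]
  have h2 := h.choose_spec
  generalize h.choose = c at h2 ⊢
  rw [pow_eq_pow_mod c hθ.pow_eq_one, pow_eq_pow_mod k hθ.pow_eq_one] at h2
  have h3 : c ≡ k [MOD (p - 1)] := hθ.pow_inj (Nat.mod_lt _ hpos) (Nat.mod_lt _ hpos) h2
  exact h3.of_dvd h4

lemma three_geom (n : ℕ) : 3 * ∑ k ∈ range n, 4 ^ k + 1 = 4 ^ n := by
  induction n with
  | zero => simp
  | succ n ih => rw [Finset.sum_range_succ, pow_succ]; omega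

lemma filterD (p θ : ℕ) [Fact p.Prime] (f : ℕ) (hf : 0 < f) (hpf : p = 4 * f + 1)
    (hθ : IsPrimitiveRoot (θ : ZMod p) (p - 1)) (i : ZMod 4) :
    (univ.filter fun v : ZMod p => v ≠ 0 ∧ dlog p θ v = i) =
      (range f).image (fun j => (θ : ZMod p) ^ (i.val + 4 * j)) := by
  have h4 : 4 ∣ p - 1 := ⟨f, by omega⟩
  have hθ0 : (θ : ZMod p) ≠ 0 := hθ.ne_zero (by omega)
  have : NeZero (p - 1) := ⟨by omega⟩
  ext v
  simp only [mem_filter, mem_univ, true_and, mem_image, mem_range]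
  constructor
  · rintro ⟨hv, rfl⟩
    obtain ⟨k, hk, rfl⟩ := hθ.eq_pow_of_pow_eq_one (ZMod.pow_card_sub_one_eq_one hv)
    refine ⟨k / 4, by omega, ?_⟩
    rw [dlog_pow p θ (by omega) h4 hθ, ZMod.val_natCast, Nat.mod_add_div]
  · rintro ⟨j, hj, rfl⟩
    refine ⟨pow_ne_zero _ hθ0, ?_⟩
    rw [dlog_pow p θ (by omega) h4 hθ]
    push_cast
    rw [show (4 : ZMod 4) = 0 from rfl]
    simp

lemma cycD_eq (p θ : ℕ) [Fact p.Prime] (f : ℕ) (hf : 0 < f) (hpf : p = 4 * f + 1)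
    (hθ : IsPrimitiveRoot (θ : ZMod p) (p - 1)) (i : ZMod 4) :
    cycD p θ i.val = (univ.filter fun v : ZMod p => v ≠ 0 ∧ dlog p θ v = i).image ZMod.val := by
  rw [filterD p θ f hf hpf hθ, Finset.image_image, cycD, show (p - 1) / 4 = f by omega]
  refine Finset.image_congr fun j _ => ?_
  simp only [Function.comp]
  rw [← ZMod.val_natCast]
  push_cast
  rfl

theorem lemma5_part8
    (p : ℕ) (hp : p.Prime) (hp8 : p % 8 = 5)
    (x y : ℤ) (hx : x % 4 = 1) (hxy : (p : ℤ) = x ^ 2 + 4 * y ^ 2)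
    (θ : ℕ) (hθ : IsPrimitiveRoot (θ : ZMod p) (p - 1))
    (hy : 16 * (((cycD p θ 0).filter (fun a => (a + 1) % p ∈ cycD p θ 1)).card : ℤ)
        = (p : ℤ) + 1 + 2 * x - 8 * y)
    :
    4 * (2 + eta4 p θ 1 + 2 * eta4 p θ 0 + 3 * eta4 p θ 3) * (2 + eta4 p θ 3 + 2 * eta4 p θ 2 + 3 * eta4 p θ 1)
      ≡ -2 * (1 - 4 * y) * Hval p θ + 5 * (p : ℤ) + 1 [ZMOD ((4 : ℤ) ^ p - 1) / 3] := by
  have : Fact p.Prime := ⟨hp⟩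
  obtain ⟨f, hpf⟩ : ∃ f, p = 4 * f + 1 := ⟨p / 4, by omega⟩
  have hf : 0 < f := by omega
  have h4 : 4 ∣ p - 1 := ⟨f, by omega⟩
  have hθ0 : (θ : ZMod p) ≠ 0 := hθ.ne_zero (by omega)
  have : NeZero (p - 1) := ⟨by omega⟩
  have hmul : ∀ a b : ZMod p, a ≠ 0 → b ≠ 0 → dlog p θ (a * b) = dlog p θ a + dlog p θ b := by
    intro a b ha hb
    obtain ⟨k, -, rfl⟩ := hθ.eq_pow_of_pow_eq_one (ZMod.pow_card_sub_one_eq_one ha)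
    obtain ⟨l, -, rfl⟩ := hθ.eq_pow_of_pow_eq_one (ZMod.pow_card_sub_one_eq_one hb)
    rw [← pow_add, dlog_pow p θ (by omega) h4 hθ, dlog_pow p θ (by omega) h4 hθ, dlog_pow p θ (by omega) h4 hθ]
    push_cast; rfl
  have hneg : dlog p θ (-1) = 2 := by
    have h1 : ((θ : ZMod p) ^ (2 * f)) ^ 2 = 1 := by
      rw [← pow_mul, show 2 * f * 2 = p - 1 by omega]; exact hθ.pow_eq_one
    have h2 : (θ : ZMod p) ^ (2 * f) ≠ 1 := hθ.pow_ne_one_of_pos_of_lt (by omega) (by omega)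
    have h3 := (mul_self_eq_one_iff.1 (by rwa [← sq])).resolve_left h2
    rw [← h3, dlog_pow p θ (by omega) h4 hθ]
    exact (ZMod.natCast_eq_natCast_iff (2 * f) 2 4).2 (by rw [Nat.ModEq]; omega)
  have hg : dlog p θ (θ : ZMod p) = 1 := by
    simpa using dlog_pow p θ (by omega) h4 hθ 1
  have hc : ∀ i, (univ.filter fun v : ZMod p => v ≠ 0 ∧ dlog p θ v = i).card = f := by
    intro i
    rw [filterD p θ f hf hpf hθ, Finset.card_image_of_injOn, Finset.card_range]
    intro a ha b hb hab
    have hi := ZMod.val_lt i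
    simp only [coe_range, Set.mem_Iio] at ha hb
    have := hθ.pow_inj (by omega) (by omega) hab
    omega
  have hD := cycD_eq p θ f hf hpf hθ
  have hn : ((cycD p θ 0).filter (fun a => (a + 1) % p ∈ cycD p θ 1)).card
      = nn p (dlog p θ) 0 1 := by
    have e0 : cycD p θ 0 = _ := hD 0
    have e1 : cycD p θ 1 = _ := hD 1
    rw [e0, e1, Finset.filter_image, Finset.card_image_of_injective _ (ZMod.val_injective p), nn,
      Finset.filter_filter]
    congr 1
    ext v
    have hv : (v.val + 1) % p = (v + 1).val := by
      rw [← ZMod.val_natCast]; push_cast; rw [ZMod.natCast_zmod_val]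
    rw [mem_filter, mem_filter, hv, (ZMod.val_injective p).mem_finset_image]
    simp only [mem_filter, mem_univ, true_and]
    tauto
  rw [hn] at hy
  obtain ⟨M, hM⟩ : ∃ M : ℕ, M = ∑ k ∈ range p, 4 ^ k := ⟨_, rfl⟩
  have h3M : 3 * M + 1 = 4 ^ p := by rw [hM]; exact three_geom p
  have hMi : ((4 : ℤ) ^ p - 1) / 3 = (M : ℤ) := by
    have : (4 : ℤ) ^ p = 3 * M + 1 := by exact_mod_cast h3M.symm
    omega
  have h4p : (4 : ZMod M) ^ p = 1 := by
    have := congrArg (Nat.cast : ℕ → ZMod M) h3M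
    push_cast at this
    rw [← this]; simp
  have heta : ∀ i : ZMod 4, ((eta4 p θ i.val : ℤ) : ZMod M) =
      ∑ t ∈ univ.filter (fun v : ZMod p => v ≠ 0 ∧ dlog p θ v = i), (4 : ZMod M) ^ t.val := by
    intro i
    rw [eta4, hD i, Finset.sum_image (fun a _ b _ h => ZMod.val_injective p h)]
    push_cast; rfl
  have main := mainR p (dlog p θ) f hpf hp8 hmul hneg θ hθ0 hg hc x y hx hxy hy
    (fun t : ZMod p => (4 : ZMod M) ^ t.val) (by simp)
    (by
      intro a b
      rw [ZMod.val_add, ← pow_add, ← pow_eq_pow_mod _ h4p])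
    (by
      have h1 : ∑ t : ZMod p, (4 : ZMod M) ^ t.val = ∑ k ∈ range p, (4 : ZMod M) ^ k := by
        refine Finset.sum_bij' (fun t _ => t.val) (fun k _ => (k : ZMod p)) ?_ ?_ ?_ ?_ ?_
        · intro t _; simpa using ZMod.val_lt t
        · intro k _; simp
        · intro t _; simp
        · intro k hk; exact ZMod.val_natCast_of_lt (by simpa using hk)
        · intro t _; rfl
      rw [h1]
      have := congrArg (Nat.cast : ℕ → ZMod M) hM
      rw [ZMod.natCast_self] at this
      push_cast at this
      exact this.symm)
    (fun i => ((eta4 p θ i.val : ℤ) : ZMod M)) heta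
  rw [hMi, ← ZMod.intCast_eq_intCast_iff, Hval]
  push_cast
  exact main
end

section
/- Lemma 6: Let U₃ = η₂ + 2η₃ + 3η₀. If d > 3 is a prime divisor of gcd(U₃, (4^p − 1)/3), then either d = 11, or d = 1 + 2p and 3p = 4(3−4y)² + 83. -/
open Finset

lemma gauss_facts {p : ℕ} [Fact p.Prime] {R : Type*} [CommRing R] [IsDomain R]
    (χ : MulChar (ZMod p) R) (h4 : χ ^ 4 = 1) (h2 : χ ^ 2 ≠ 1) (hm : χ (-1) = -1)
    (ψ : AddChar (ZMod p) R) (hψ : ψ.IsPrimitive) :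
    gaussSum χ ψ ^ 2 = gaussSum (χ ^ 2) ψ * jacobiSum χ χ ∧
    gaussSum (χ ^ 3) ψ ^ 2 = gaussSum (χ ^ 2) ψ * jacobiSum (χ ^ 3) (χ ^ 3) ∧
    gaussSum χ ψ * gaussSum (χ ^ 3) ψ = - (p : R) ∧
    gaussSum (χ ^ 2) ψ ^ 2 = (p : R) ∧
    gaussSum χ ψ * gaussSum (χ ^ 2) ψ = gaussSum (χ ^ 3) ψ * jacobiSum χ (χ ^ 2) ∧
    gaussSum (χ ^ 3) ψ * gaussSum (χ ^ 2) ψ = gaussSum χ ψ * jacobiSum (χ ^ 3) (χ ^ 2) := by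
  have h1 : χ ≠ 1 := by rintro rfl; simp at h2
  have h33 : χ ^ 3 * χ ^ 3 = χ ^ 2 := by
    rw [← pow_add, show 3 + 3 = 4 + 2 by norm_num, pow_add, h4, one_mul]
  have h3 : χ ^ 3 ≠ 1 := by
    intro h; rw [h, one_mul] at h33; exact h2 h33.symm
  have h12 : χ * χ ^ 2 = χ ^ 3 := by rw [← pow_succ']
  have h32 : χ ^ 3 * χ ^ 2 = χ := by
    rw [← pow_add, show 3 + 2 = 4 + 1 by norm_num, pow_add, h4, one_mul, pow_one]
  have hinv : χ⁻¹ = χ ^ 3 := by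
    rw [inv_eq_iff_mul_eq_one, ← h4, ← pow_succ']
  have hinv2 : (χ ^ 2)⁻¹ = χ ^ 2 := by
    rw [inv_eq_iff_mul_eq_one, ← h4, ← pow_add]
  have e1 := gaussSum_mul_gaussSum_eq_card h1 hψ
  have e2 := gaussSum_mul_gaussSum_eq_card h2 hψ
  rw [hinv, ZMod.card] at e1
  rw [hinv2, ZMod.card] at e2
  have f1 := mul_gaussSum_inv_eq_gaussSum (χ ^ 3) ψ
  have f2 := mul_gaussSum_inv_eq_gaussSum (χ ^ 2) ψ
  rw [MulChar.pow_apply' _ (by norm_num), hm] at f1 f2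
  refine ⟨?_, ?_, ?_, ?_, ?_, ?_⟩
  · have := jacobiSum_mul_nontrivial (χ := χ) (φ := χ) (by rwa [← sq]) ψ
    rw [← sq] at this
    rw [this, sq]
  · have := jacobiSum_mul_nontrivial (χ := χ ^ 3) (φ := χ ^ 3) (by rwa [h33]) ψ
    rw [h33] at this
    rw [this, sq]
  · rw [← f1, ← e1]; ring
  · rw [sq, ← e2]; nth_rw 2 [← f2]; ring
  · have := jacobiSum_mul_nontrivial (χ := χ) (φ := χ ^ 2) (by rwa [h12]) ψ
    rw [h12] at this
    rw [this]
  · have := jacobiSum_mul_nontrivial (χ := χ ^ 3) (φ := χ ^ 2) (by rwa [h32]) ψ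
    rw [h32] at this
    rw [this]

lemma jac_complex {p : ℕ} [Fact p.Prime]
    (χ : MulChar (ZMod p) ℂ) (h4 : χ ^ 4 = 1) (h2 : χ ^ 2 ≠ 1) (hm : χ (-1) = -1) :
    jacobiSum χ χ * jacobiSum (χ ^ 3) (χ ^ 3) = p ∧
    jacobiSum χ (χ ^ 2) = - jacobiSum χ χ ∧
    jacobiSum (χ ^ 3) (χ ^ 2) = - jacobiSum (χ ^ 3) (χ ^ 3) := by
  obtain ⟨a, b, c, e, f, g⟩ := gauss_facts χ h4 h2 hm _ (ZMod.isPrimitive_stdAddChar p)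
  have hp : (p : ℂ) ≠ 0 := by exact_mod_cast (Fact.out : p.Prime).ne_zero
  set G1 := gaussSum χ ZMod.stdAddChar
  set G2 := gaussSum (χ ^ 2) ZMod.stdAddChar
  set G3 := gaussSum (χ ^ 3) ZMod.stdAddChar
  refine ⟨?_, ?_, ?_⟩
  · apply mul_left_cancel₀ hp
    linear_combination (-jacobiSum χ χ * jacobiSum (χ ^ 3) (χ ^ 3)) * e - a * G2 * jacobiSum (χ ^ 3) (χ ^ 3) - G1 ^ 2 * b + (G1 * G3 - p) * c
  · apply mul_left_cancel₀ hp
    linear_combination jacobiSum χ (χ ^ 2) * c + G1 * f - G2 * a - jacobiSum χ χ * e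
  · apply mul_left_cancel₀ hp
    linear_combination jacobiSum (χ ^ 3) (χ ^ 2) * c + G3 * g - G2 * b - jacobiSum (χ ^ 3) (χ ^ 3) * e

def gI : GaussianInt := ⟨0, 1⟩

lemma gI_sq : gI * gI = -1 := by decide

lemma gI_four : gI ^ 4 = 1 := by
  rw [show gI ^ 4 = (gI * gI) * (gI * gI) by ring, gI_sq]; ring

lemma gI_pow (n : ℕ) : gI ^ n = gI ^ (n % 4) := by
  conv_lhs => rw [← Nat.div_add_mod n 4, pow_add, pow_mul, gI_four, one_pow, one_mul]

lemma exists_chi (p : ℕ) [Fact p.Prime] (hp8 : p % 8 = 5) (θ : ℕ)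
    (hθ : IsPrimitiveRoot (θ : ZMod p) (p - 1)) :
    ∃ χ : MulChar (ZMod p) GaussianInt, χ (θ : ZMod p) = gI ∧
      ∀ a : ZMod p, a ≠ 0 → ∃ n < p - 1, a = (θ : ZMod p) ^ n := by
  have hpp : p.Prime := Fact.out
  have hne : NeZero (p - 1) := ⟨by omega⟩
  have hu : IsUnit (θ : ZMod p) := hθ.isUnit (by omega)
  obtain ⟨g, hg⟩ := hu
  have hgp : IsPrimitiveRoot g (p - 1) := by
    rw [← hg] at hθ; exact IsPrimitiveRoot.coe_units_iff.mp hθ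
  have hall : ∀ a : ZMod p, a ≠ 0 → ∃ n < p - 1, a = (θ : ZMod p) ^ n := by
    intro a ha
    obtain ⟨n, hn, h⟩ := hθ.eq_pow_of_pow_eq_one (ξ := a) (ZMod.pow_card_sub_one_eq_one ha)
    exact ⟨n, hn, h.symm⟩
  have hgen : ∀ x : (ZMod p)ˣ, x ∈ Subgroup.zpowers g := by
    intro x
    obtain ⟨n, hn, h⟩ := hall x x.ne_zero
    refine ⟨n, ?_⟩
    ext
    simp [hg, h]
  let ζ : GaussianIntˣ := ⟨gI, -gI, by rw [mul_neg, gI_sq]; ring, by rw [neg_mul, gI_sq]; ring⟩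
  have hζ : ζ ∈ rootsOfUnity (Fintype.card (ZMod p)ˣ) GaussianInt := by
    rw [mem_rootsOfUnity, ZMod.card_units]
    ext1
    rw [Units.val_pow_eq_pow_val]
    change gI ^ (p - 1) = 1
    rw [gI_pow, show (p - 1) % 4 = 0 by omega, pow_zero]
  refine ⟨MulChar.ofRootOfUnity hζ hgen, ?_, hall⟩
  rw [← hg, MulChar.ofRootOfUnity_spec]

lemma chi_vals {p : ℕ} [Fact p.Prime] {θ : ℕ} {χ : MulChar (ZMod p) GaussianInt}
    (hχ : χ (θ : ZMod p) = gI)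
    (hall : ∀ a : ZMod p, a ≠ 0 → ∃ n < p - 1, a = (θ : ZMod p) ^ n) (a : ZMod p) :
    (a = 0 ∧ χ a = 0) ∨ (a ≠ 0 ∧ (χ a = 1 ∨ χ a = gI ∨ χ a = -1 ∨ χ a = -gI)) := by
  by_cases ha : a = 0
  · left; exact ⟨ha, by rw [ha]; exact MulChar.map_zero χ⟩
  right
  refine ⟨ha, ?_⟩
  obtain ⟨n, -, rfl⟩ := hall a ha
  rw [map_pow, hχ, gI_pow]
  have : n % 4 < 4 := Nat.mod_lt _ (by norm_num)
  interval_cases n % 4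
  · simp
  · simp
  · right; right; left; rw [sq, gI_sq]
  · right; right; right; rw [pow_succ, sq, gI_sq]; ring

lemma mem_cycD {p : ℕ} [Fact p.Prime] (hp8 : p % 8 = 5) {θ : ℕ}
    {χ : MulChar (ZMod p) GaussianInt} (hχ : χ (θ : ZMod p) = gI)
    (hall : ∀ a : ZMod p, a ≠ 0 → ∃ n < p - 1, a = (θ : ZMod p) ^ n) (a : ZMod p)
    (k : ℕ) (hk : k < 4) : a.val ∈ cycD p θ k ↔ χ a = gI ^ k := by
  have hpp : p.Prime := Fact.out
  unfold cycD
  rw [Finset.mem_image]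
  constructor
  · rintro ⟨j, -, hj⟩
    have : a = (θ : ZMod p) ^ (k + 4 * j) := by
      have h := congrArg (Nat.cast : ℕ → ZMod p) hj
      simp at h
      exact h.symm
    rw [this, map_pow, hχ, pow_add, pow_mul, gI_four, one_pow, mul_one]
  · intro h
    have ha : a ≠ 0 := by
      rintro rfl
      rw [MulChar.map_zero] at h
      interval_cases k <;> revert h <;> decide
    obtain ⟨n, hn, rfl⟩ := hall a ha
    rw [map_pow, hχ, gI_pow] at h
    have hnk : n % 4 = k := by
      have : n % 4 < 4 := Nat.mod_lt _ (by norm_num)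
      generalize n % 4 = m at *
      interval_cases m <;> interval_cases k <;> revert h <;> decide
    refine ⟨n / 4, ?_, ?_⟩
    · rw [Finset.mem_range]; omega
    · rw [show k + 4 * (n / 4) = n by omega, ← Nat.cast_pow, ZMod.val_natCast]
lemma gI_ne : (gI : GaussianInt) ≠ 0 ∧ gI ≠ 1 ∧ gI ≠ -1 ∧ gI ≠ -gI ∧ (1 : GaussianInt) ≠ -1 ∧
    (1 : GaussianInt) ≠ -gI ∧ (1 : GaussianInt) ≠ 0 := by decide

lemma chi_facts {p : ℕ} [Fact p.Prime] (hp8 : p % 8 = 5) {θ : ℕ}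
    (hθ : IsPrimitiveRoot (θ : ZMod p) (p - 1))
    {χ : MulChar (ZMod p) GaussianInt} (hχ : χ (θ : ZMod p) = gI)
    (hall : ∀ a : ZMod p, a ≠ 0 → ∃ n < p - 1, a = (θ : ZMod p) ^ n) :
    χ ^ 4 = 1 ∧ χ ^ 2 ≠ 1 ∧ χ (-1) = -1 ∧ ∀ a, (χ ^ 3) a = star (χ a) := by
  have hu : IsUnit (θ : ZMod p) := hθ.isUnit (by omega)
  refine ⟨?_, ?_, ?_, ?_⟩
  · apply MulChar.ext
    intro a
    rw [MulChar.pow_apply_coe, MulChar.one_apply_coe]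
    rcases chi_vals hχ hall (a : ZMod p) with ⟨h, -⟩ | ⟨-, h | h | h | h⟩
    · exact absurd h a.ne_zero
    all_goals rw [h]; decide
  · intro h
    have h' := congrArg (fun f : MulChar (ZMod p) GaussianInt => f (θ : ZMod p)) h
    beta_reduce at h'
    rw [MulChar.pow_apply' _ (by norm_num), hχ, MulChar.one_apply hu] at h'
    revert h'; decide
  · have h1 : (θ : ZMod p) ^ ((p - 1) / 2) = -1 := by
      have h2 : (θ : ZMod p) ^ ((p - 1) / 2) ≠ 1 :=
        hθ.pow_ne_one_of_pos_of_lt (by omega) (by omega)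
      have h3 : (θ : ZMod p) ^ ((p - 1) / 2) * (θ : ZMod p) ^ ((p - 1) / 2) = 1 := by
        rw [← pow_add, show (p - 1) / 2 + (p - 1) / 2 = p - 1 by omega, hθ.pow_eq_one]
      rcases mul_self_eq_one_iff.mp h3 with h | h
      · exact absurd h h2
      · exact h
    rw [← h1, map_pow, hχ, gI_pow, show (p - 1) / 2 % 4 = 2 by omega, sq, gI_sq]
  · intro a
    rw [MulChar.pow_apply' _ (by norm_num)]
    rcases chi_vals hχ hall a with ⟨-, h⟩ | ⟨-, h | h | h | h⟩
    all_goals rw [h]; decide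

lemma card_eq {p : ℕ} [Fact p.Prime] (hp8 : p % 8 = 5) {θ : ℕ}
    {χ : MulChar (ZMod p) GaussianInt} (hχ : χ (θ : ZMod p) = gI)
    (hall : ∀ a : ZMod p, a ≠ 0 → ∃ n < p - 1, a = (θ : ZMod p) ^ n) :
    ((cycD p θ 0).filter (fun a => (a + 1) % p ∈ cycD p θ 1)).card =
    (Finset.univ.filter (fun a : ZMod p => χ a = 1 ∧ χ (a + 1) = gI)).card := by
  have hpp : p.Prime := Fact.out
  have : Fact (1 < p) := ⟨hpp.one_lt⟩
  have key : ∀ a : ZMod p, (a.val ∈ cycD p θ 0 ∧ (a.val + 1) % p ∈ cycD p θ 1) ↔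
      (χ a = 1 ∧ χ (a + 1) = gI) := by
    intro a
    rw [mem_cycD hp8 hχ hall a 0 (by norm_num), pow_zero]
    have := mem_cycD hp8 hχ hall (a + 1) 1 (by norm_num)
    rw [pow_one, ZMod.val_add, ZMod.val_one] at this
    rw [this]
  symm
  apply Finset.card_bij (fun a _ => a.val)
  · intro a ha
    rw [Finset.mem_filter] at ha ⊢
    exact (key a).mpr ha.2
  · intro a _ b _ h
    exact ZMod.val_injective p h
  · intro t ht
    rw [Finset.mem_filter] at ht
    have htp : t < p := by
      have h := ht.1
      unfold cycD at h
      rw [Finset.mem_image] at h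
      obtain ⟨j, -, rfl⟩ := h
      exact Nat.mod_lt _ hpp.pos
    have hv : ((t : ZMod p)).val = t := ZMod.val_cast_of_lt htp
    refine ⟨(t : ZMod p), ?_, hv⟩
    rw [Finset.mem_filter]
    refine ⟨Finset.mem_univ _, (key _).mp ?_⟩
    rw [hv]; exact ht

lemma count_eq {p : ℕ} [Fact p.Prime] {θ : ℕ}
    {χ : MulChar (ZMod p) GaussianInt} (hχ : χ (θ : ZMod p) = gI)
    (hall : ∀ a : ZMod p, a ≠ 0 → ∃ n < p - 1, a = (θ : ZMod p) ^ n)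
    (hm : χ (-1) = -1) :
    16 * ((Finset.univ.filter (fun a : ZMod p => χ a = 1 ∧ χ (a + 1) = gI)).card : GaussianInt) =
    ∑ u : ZMod p, ((1 : MulChar (ZMod p) GaussianInt) u - χ u + (χ ^ 2) u - (χ ^ 3) u) *
      ((1 : MulChar (ZMod p) GaussianInt) (1 - u) - gI * χ (1 - u) - (χ ^ 2) (1 - u)
        + gI * (χ ^ 3) (1 - u)) := by
  have A : ∀ u : ZMod p, ((1 : MulChar (ZMod p) GaussianInt) u - χ u + (χ ^ 2) u - (χ ^ 3) u) =
      if χ (-u) = 1 then 4 else 0 := by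
    intro u
    have e : χ (-u) = - χ u := by rw [← neg_one_mul u, map_mul, hm, neg_one_mul]
    rw [MulChar.pow_apply' _ (by norm_num), MulChar.pow_apply' _ (by norm_num), e]
    rcases chi_vals hχ hall u with ⟨h0, h⟩ | ⟨h0, h⟩
    · rw [h, h0, MulChar.map_zero]; decide
    · rw [MulChar.one_apply (IsUnit.mk0 _ h0)]
      rcases h with h | h | h | h
      all_goals rw [h]; decide
  have B : ∀ u : ZMod p, ((1 : MulChar (ZMod p) GaussianInt) u - gI * χ u - (χ ^ 2) u
      + gI * (χ ^ 3) u) = if χ u = gI then 4 else 0 := by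
    intro u
    rw [MulChar.pow_apply' _ (by norm_num), MulChar.pow_apply' _ (by norm_num)]
    rcases chi_vals hχ hall u with ⟨h0, h⟩ | ⟨h0, h⟩
    · rw [h, h0, MulChar.map_zero]; decide
    · rw [MulChar.one_apply (IsUnit.mk0 _ h0)]
      rcases h with h | h | h | h
      all_goals rw [h]; decide
  simp_rw [A, B]
  rw [← Equiv.sum_comp (Equiv.neg (ZMod p))]
  simp only [Equiv.neg_apply, neg_neg, sub_neg_eq_add]
  rw [Finset.card_filter, Nat.cast_sum, Finset.mul_sum]
  apply Finset.sum_congr rfl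
  intro a _
  rw [add_comm 1 a]
  by_cases h1 : χ a = 1 <;> by_cases h2 : χ (a + 1) = gI <;> simp [h1, h2]
  norm_num

lemma key_jac {p : ℕ} [Fact p.Prime] (hp8 : p % 8 = 5) {θ : ℕ}
    (hθ : IsPrimitiveRoot (θ : ZMod p) (p - 1))
    {χ : MulChar (ZMod p) GaussianInt} (hχ : χ (θ : ZMod p) = gI)
    (hall : ∀ a : ZMod p, a ≠ 0 → ∃ n < p - 1, a = (θ : ZMod p) ^ n) :
    ∃ X Y : ℤ, jacobiSum χ χ = ⟨X, Y⟩ ∧ jacobiSum (χ ^ 3) (χ ^ 3) = ⟨X, -Y⟩ ∧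
      X ^ 2 + Y ^ 2 = p ∧
      16 * (((cycD p θ 0).filter (fun a => (a + 1) % p ∈ cycD p θ 1)).card : ℤ)
        = p + 1 - 2 * X - 4 * Y := by
  obtain ⟨h4, h2, hm, hstar⟩ := chi_facts hp8 hθ hχ hall
  have hinj : Function.Injective GaussianInt.toComplex := by
    intro a b h; exact GaussianInt.toComplex_inj.mp h
  -- transfer
  have hcomp := MulChar.injective_ringHomComp (R := ZMod p) hinj
  set χ' := χ.ringHomComp GaussianInt.toComplex with hχ'
  have hpow : ∀ n, (χ ^ n).ringHomComp GaussianInt.toComplex = χ' ^ n := by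
    intro n; rw [MulChar.ringHomComp_pow]
  obtain ⟨n1, n2, n3⟩ := jac_complex χ'
    (by rw [← hpow, h4, MulChar.ringHomComp_one])
    (by rw [← hpow]; intro h; apply h2; apply hcomp
        simp only []
        rw [h, MulChar.ringHomComp_one])
    (by rw [hχ', MulChar.ringHomComp_apply, hm]; simp)
  rw [← hpow, hχ', jacobiSum_ringHomComp, jacobiSum_ringHomComp, ← map_mul] at n1
  rw [← hpow, hχ', jacobiSum_ringHomComp, jacobiSum_ringHomComp, ← map_neg] at n2
  rw [← hpow, ← hpow, jacobiSum_ringHomComp, jacobiSum_ringHomComp, ← map_neg] at n3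
  replace n2 := hinj n2
  replace n3 := hinj n3
  have n1' : jacobiSum χ χ * jacobiSum (χ ^ 3) (χ ^ 3) = (p : GaussianInt) := by
    apply hinj; rw [n1]; simp
  have hJs : jacobiSum (χ ^ 3) (χ ^ 3) = star (jacobiSum χ χ) := by
    simp only [jacobiSum, star_sum, star_mul', hstar]
  have h1 : χ ≠ 1 := by rintro rfl; simp at h2
  have h33 : χ ^ 3 * χ ^ 3 = χ ^ 2 := by
    rw [← pow_add, show 3 + 3 = 4 + 2 by norm_num, pow_add, h4, one_mul]
  have h3 : χ ^ 3 ≠ 1 := by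
    intro h; rw [h, one_mul] at h33; exact h2 h33.symm
  have hinv : χ⁻¹ = χ ^ 3 := by
    rw [inv_eq_iff_mul_eq_one, ← h4, ← pow_succ']
  have hinv2 : (χ ^ 2)⁻¹ = χ ^ 2 := by
    rw [inv_eq_iff_mul_eq_one, ← h4, ← pow_add]
  have j00 := jacobiSum_one_one (F := ZMod p) (R := GaussianInt)
  rw [ZMod.card] at j00
  have j01 := jacobiSum_one_nontrivial h1
  have j02 := jacobiSum_one_nontrivial h2
  have j03 := jacobiSum_one_nontrivial h3
  have j10 := j01
  have j20 := j02
  have j30 := j03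
  rw [jacobiSum_comm] at j10 j20 j30
  have j13 := jacobiSum_nontrivial_inv h1
  rw [hinv, hm] at j13
  have j31 := j13
  rw [jacobiSum_comm] at j31
  have j22 := jacobiSum_nontrivial_inv h2
  rw [hinv2, MulChar.pow_apply' _ (by norm_num), hm] at j22
  have n2' := n2
  have n3' := n3
  rw [jacobiSum_comm] at n2' n3'
  have hc := count_eq hχ hall hm
  rw [← card_eq hp8 hχ hall] at hc
  have hexp : (∑ u : ZMod p, ((1 : MulChar (ZMod p) GaussianInt) u - χ u + (χ ^ 2) u - (χ ^ 3) u) *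
      ((1 : MulChar (ZMod p) GaussianInt) (1 - u) - gI * χ (1 - u) - (χ ^ 2) (1 - u)
        + gI * (χ ^ 3) (1 - u))) =
      (jacobiSum (1 : MulChar (ZMod p) GaussianInt) 1 - gI * jacobiSum 1 χ - jacobiSum 1 (χ ^ 2) + gI * jacobiSum 1 (χ ^ 3))
      - (jacobiSum χ 1 - gI * jacobiSum χ χ - jacobiSum χ (χ ^ 2) + gI * jacobiSum χ (χ ^ 3))
      + (jacobiSum (χ ^ 2) 1 - gI * jacobiSum (χ ^ 2) χ - jacobiSum (χ ^ 2) (χ ^ 2)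
          + gI * jacobiSum (χ ^ 2) (χ ^ 3))
      - (jacobiSum (χ ^ 3) 1 - gI * jacobiSum (χ ^ 3) χ - jacobiSum (χ ^ 3) (χ ^ 2)
          + gI * jacobiSum (χ ^ 3) (χ ^ 3)) := by
    simp only [jacobiSum, Finset.mul_sum, ← Finset.sum_add_distrib, ← Finset.sum_sub_distrib]
    apply Finset.sum_congr rfl
    intro u _
    ring
  rw [hexp, j00, j01, j02, j03, j10, j20, j30, j13, j31, j22, n2, n3, n2', n3', hJs] at hc
  rw [hJs] at n1'
  refine ⟨(jacobiSum χ χ).re, (jacobiSum χ χ).im, rfl, hJs, ?_, ?_⟩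
  · have := congrArg Zsqrtd.re n1'
    simp at this
    rw [← this]; ring
  · have := congrArg Zsqrtd.re hc
    simp [gI] at this
    rw [this]; ring
lemma ident {p : ℕ} (hpp : p.Prime) (hp8 : p % 8 = 5) (x y X Y N : ℤ) (hx : x % 4 = 1)
    (hxy : (p : ℤ) = x ^ 2 + 4 * y ^ 2) (hXY : X ^ 2 + Y ^ 2 = p)
    (h1 : 16 * N = p + 1 + 2 * x - 8 * y) (h2 : 16 * N = p + 1 - 2 * X - 4 * Y) :
    Y = 2 * y := by
  have hX2 : X % 2 = 1 := by omega
  have hY2 : Y % 2 = 0 := by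
    obtain ⟨s, hs⟩ : ∃ s, X = 2 * s + 1 := ⟨X / 2, by omega⟩
    rcases Int.emod_two_eq_zero_or_one Y with h | h
    · exact h
    · obtain ⟨t, ht⟩ : ∃ t, Y = 2 * t + 1 := ⟨Y / 2, by omega⟩
      have : (p : ℤ) = 2 * (2 * s ^ 2 + 2 * s + 2 * t ^ 2 + 2 * t + 1) := by
        rw [← hXY, hs, ht]; ring
      omega
  obtain ⟨z, rfl⟩ : ∃ z, Y = 2 * z := ⟨Y / 2, by omega⟩
  have hX : X % 4 = 3 := by omega
  have hP : Prime (p : ℤ) := Nat.prime_iff_prime_int.mp hpp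
  have hpos : (0 : ℤ) < p := by exact_mod_cast hpp.pos
  have hdv : (p : ℤ) ∣ (x * z - X * y) * (x * z + X * y) :=
    ⟨z ^ 2 - y ^ 2, by linear_combination (-z ^ 2) * hxy - y ^ 2 * hXY⟩
  have hsq : z ^ 2 = y ^ 2 := by
    have fin : (x * z - X * y) * (x * z + X * y) = 0 → z ^ 2 = y ^ 2 := by
      intro h
      have : (p : ℤ) * (z ^ 2 - y ^ 2) = 0 := by
        linear_combination h + z ^ 2 * hxy + y ^ 2 * hXY
      rcases mul_eq_zero.mp this with h | h
      · omega
      · linarith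
    apply fin
    have small : ∀ A B : ℤ, (p : ℤ) ∣ A → (p : ℤ) ^ 2 = B ^ 2 + 4 * A ^ 2 → A = 0 := by
      rintro A B ⟨c, rfl⟩ h
      by_contra hne
      have hc : c ≠ 0 := by rintro rfl; simp at hne
      have : 1 ≤ c ^ 2 := by have := sq_nonneg c; have := pow_ne_zero 2 hc; omega
      nlinarith [sq_nonneg B, mul_pos hpos hpos]
    rcases hP.dvd_or_dvd hdv with h | h
    · rw [small _ (x * X + 4 * y * z) h (by
        linear_combination (p : ℤ) * hxy - (x ^ 2 + 4 * y ^ 2) * hXY), zero_mul]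
    · rw [small _ (x * X - 4 * y * z) h (by
        linear_combination (p : ℤ) * hxy - (x ^ 2 + 4 * y ^ 2) * hXY), mul_zero]
  have hxx : (x - X) * (x + X) = 0 := by linear_combination -hxy - hXY + 4 * hsq
  rcases mul_eq_zero.mp hxx with h | h <;> omega

lemma eta_eq {p : ℕ} [Fact p.Prime] (hp8 : p % 8 = 5) {θ : ℕ}
    {χ : MulChar (ZMod p) GaussianInt} (hχ : χ (θ : ZMod p) = gI)
    (hall : ∀ a : ZMod p, a ≠ 0 → ∃ n < p - 1, a = (θ : ZMod p) ^ n)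
    (k : ℕ) (hk : k < 4) :
    eta4 p θ k = ∑ a : ZMod p, if χ a = gI ^ k then (4 : ℤ) ^ a.val else 0 := by
  have hpp : p.Prime := Fact.out
  unfold eta4
  rw [← Finset.sum_filter]
  symm
  apply Finset.sum_bij (fun (a : ZMod p) _ => a.val)
  · intro a ha
    rw [Finset.mem_filter] at ha
    exact (mem_cycD hp8 hχ hall a k hk).mpr ha.2
  · intro a _ b _ h
    exact ZMod.val_injective p h
  · intro t ht
    have htp : t < p := by
      have h := ht
      unfold cycD at h
      rw [Finset.mem_image] at h
      obtain ⟨j, -, rfl⟩ := h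
      exact Nat.mod_lt _ hpp.pos
    have hv : ((t : ZMod p)).val = t := ZMod.val_cast_of_lt htp
    refine ⟨(t : ZMod p), ?_, hv⟩
    rw [Finset.mem_filter]
    refine ⟨Finset.mem_univ _, (mem_cycD hp8 hχ hall _ k hk).mp ?_⟩
    rw [hv]; exact ht
  · intro a _; rfl

lemma mod_d {p : ℕ} [Fact p.Prime] (hp8 : p % 8 = 5) {θ : ℕ}
    (hθ : IsPrimitiveRoot (θ : ZMod p) (p - 1))
    {χ : MulChar (ZMod p) GaussianInt} (hχ : χ (θ : ZMod p) = gI)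
    (hall : ∀ a : ZMod p, a ≠ 0 → ∃ n < p - 1, a = (θ : ZMod p) ^ n)
    (X y : ℤ) (hJ : jacobiSum χ χ = ⟨X, 2 * y⟩)
    (hJ3 : jacobiSum (χ ^ 3) (χ ^ 3) = ⟨X, -(2 * y)⟩)
    {L : Type*} [Field L] (i : L) (hi : i * i = -1) (h2 : (2 : L) ≠ 0)
    (h4 : IsPrimitiveRoot (4 : L) p)
    (hU : ((eta4 p θ 2 + 2 * eta4 p θ 3 + 3 * eta4 p θ 0 : ℤ) : L) = 0) :
    (((5 * p + 9) ^ 2 - 4 * (3 - 4 * y) ^ 2 * p : ℤ) : L) = 0 := by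
  have hpp : p.Prime := Fact.out
  obtain ⟨c4, c2, cm, -⟩ := chi_facts hp8 hθ hχ hall
  let f : GaussianInt →+* L := Zsqrtd.lift ⟨i, by rw [hi]; simp⟩
  have hf : ∀ a b : ℤ, f ⟨a, b⟩ = a + b * i := fun a b => rfl
  have hfI : f gI = i := by unfold gI; rw [hf]; simp
  let ψ : AddChar (ZMod p) L := AddChar.zmodChar p ((IsPrimitiveRoot.iff_def (4 : L) p).mp h4).left
  have hψ : ψ.IsPrimitive := AddChar.zmodChar_primitive_of_primitive_root p h4
  have hψa : ∀ a, ψ a = 4 ^ a.val := fun a => rfl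
  have hi0 : i ≠ 0 := by rintro rfl; simp at hi
  set χ' := χ.ringHomComp f with hχ'
  have hpow : ∀ n, (χ ^ n).ringHomComp f = χ' ^ n := by
    intro n; rw [MulChar.ringHomComp_pow]
  have hu : IsUnit (θ : ZMod p) := hθ.isUnit (by omega)
  obtain ⟨g1, g2, g3, g4, -, -⟩ := gauss_facts χ'
    (by rw [← hpow, c4, MulChar.ringHomComp_one])
    (by
      intro h
      have h' := congrArg (fun f : MulChar (ZMod p) L => f (θ : ZMod p)) h
      beta_reduce at h'
      rw [MulChar.pow_apply' _ (by norm_num), hχ', MulChar.ringHomComp_apply, hχ, hfI,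
        MulChar.one_apply hu, sq, hi] at h'
      apply h2
      linear_combination -h')
    (by rw [hχ', MulChar.ringHomComp_apply, cm]; simp) ψ hψ
  have hψ1 : ψ ≠ 1 := by
    intro h
    have h' := congrArg (fun f : AddChar (ZMod p) L => f 1) h
    have : Fact (1 < p) := ⟨hpp.one_lt⟩
    simp only [hψa, ZMod.val_one, pow_one, AddChar.one_apply] at h'
    rw [h'] at h4
    exact hpp.one_lt.ne' (h4.unique IsPrimitiveRoot.one)
  have g0 := gaussSum_one_left hψ1
  have e : ∀ k < 4, ((eta4 p θ k : ℤ) : L) = ∑ a : ZMod p, if χ a = gI ^ k then ψ a else 0 := by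
    intro k hk
    rw [eta_eq hp8 hχ hall k hk]
    push_cast
    apply Finset.sum_congr rfl
    intro a _
    split_ifs <;> simp [hψa]
  have q2 : gI ^ 2 = -1 := by decide
  have q3 : gI ^ 3 = -gI := by decide
  have e0 := e 0 (by norm_num)
  have e1 := e 1 (by norm_num)
  have e2 := e 2 (by norm_num)
  have e3 := e 3 (by norm_num)
  rw [pow_zero] at e0
  rw [pow_one] at e1
  rw [q2] at e2
  rw [q3] at e3
  obtain ⟨r1, r2, r3, r4, r5, r6, r7⟩ := gI_ne
  have r8 : (-1 : GaussianInt) ≠ -gI := by decide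
  have r9 : (-gI : GaussianInt) ≠ 1 := r6.symm
  have r10 : (-1 : GaussianInt) ≠ 1 := r5.symm
  have r11 : (-1 : GaussianInt) ≠ gI := r3.symm
  have r12 : (-gI : GaussianInt) ≠ gI := r4.symm
  have r13 : (-gI : GaussianInt) ≠ -1 := r8.symm
  have r14 : (0 : GaussianInt) ≠ -gI := by decide
  have r15 : (0 : GaussianInt) ≠ gI := by decide
  have r16 : (0 : GaussianInt) ≠ -1 := by decide
  have i2 : i ^ 2 = -1 := by rw [sq, hi]
  have i3 : i ^ 3 = -i := by rw [pow_succ, i2]; ring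
  have i3' : (-i) ^ 3 = i := by linear_combination -i3
  have m3 : (-1 : L) ^ 3 = -1 := by ring
  have s0 : gaussSum (1 : MulChar (ZMod p) L) ψ = eta4 p θ 0 + eta4 p θ 1 + eta4 p θ 2 + eta4 p θ 3 := by
    rw [e0, e1, e2, e3, gaussSum]
    simp only [← Finset.sum_add_distrib]
    apply Finset.sum_congr rfl
    intro a _
    rcases chi_vals hχ hall a with ⟨h0, h⟩ | ⟨h0, h⟩
    · rw [h, h0, MulChar.map_zero]; simp [r14, r15, r16]
    · rw [MulChar.one_apply (IsUnit.mk0 _ h0)]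
      rcases h with h | h | h | h <;>
        simp [h, r2, r3, r4, r5, r6, r8, r9, r10, r11, r12, r13, r2.symm]
  have s1 : gaussSum χ' ψ = eta4 p θ 0 + i * eta4 p θ 1 - eta4 p θ 2 - i * eta4 p θ 3 := by
    rw [e0, e1, e2, e3, gaussSum]
    simp only [Finset.mul_sum, ← Finset.sum_add_distrib, ← Finset.sum_sub_distrib]
    apply Finset.sum_congr rfl
    intro a _
    rw [hχ', MulChar.ringHomComp_apply]
    rcases chi_vals hχ hall a with ⟨h0, h⟩ | ⟨h0, h⟩
    · simp [h, r14, r15, r16]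
    · rcases h with h | h | h | h <;>
        simp [h, hfI, r2, r3, r4, r5, r6, r8, r9, r10, r11, r12, r13, r2.symm]
  have s2 : gaussSum (χ' ^ 2) ψ = eta4 p θ 0 - eta4 p θ 1 + eta4 p θ 2 - eta4 p θ 3 := by
    rw [e0, e1, e2, e3, gaussSum]
    simp only [Finset.mul_sum, ← Finset.sum_add_distrib, ← Finset.sum_sub_distrib]
    apply Finset.sum_congr rfl
    intro a _
    rw [MulChar.pow_apply' _ (by norm_num), hχ', MulChar.ringHomComp_apply]
    rcases chi_vals hχ hall a with ⟨h0, h⟩ | ⟨h0, h⟩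
    · simp [h, r14, r15, r16]
    · rcases h with h | h | h | h <;>
        simp [h, hfI, i2, r2, r3, r4, r5, r6, r8, r9, r10, r11, r12, r13, r2.symm]
  have s3 : gaussSum (χ' ^ 3) ψ = eta4 p θ 0 - i * eta4 p θ 1 - eta4 p θ 2 + i * eta4 p θ 3 := by
    rw [e0, e1, e2, e3, gaussSum]
    simp only [Finset.mul_sum, ← Finset.sum_add_distrib, ← Finset.sum_sub_distrib]
    apply Finset.sum_congr rfl
    intro a _
    rw [MulChar.pow_apply' _ (by norm_num), hχ', MulChar.ringHomComp_apply]
    rcases chi_vals hχ hall a with ⟨h0, h⟩ | ⟨h0, h⟩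
    · simp [h, r14, r15, r16]
    · rcases h with h | h | h | h <;>
        simp [h, hfI, i3, i3', m3, r2, r3, r4, r5, r6, r8, r9, r10, r11, r12, r13, r2.symm]
  rw [s0] at g0
  rw [hχ', jacobiSum_ringHomComp, ← hχ', s1, s2, hJ, hf] at g1
  rw [← hpow 3, jacobiSum_ringHomComp, hpow 3, s3, s2, hJ3, hf] at g2
  rw [s1, s3] at g3
  rw [s2] at g4
  push_cast at g1 g2 hU ⊢
  clear e0 e1 e2 e3 e s0 s1 s2 s3
  generalize ((eta4 p θ 0 : ℤ) : L) = u0 at *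
  generalize ((eta4 p θ 1 : ℤ) : L) = u1 at *
  generalize ((eta4 p θ 2 : ℤ) : L) = u2 at *
  generalize ((eta4 p θ 3 : ℤ) : L) = u3 at *
  have hab : (u0 - u2) * (u1 - u3) = y * (u0 - u1 + u2 - u3) := by
    have h4i : (2 * 2 * i) ≠ 0 := mul_ne_zero (mul_ne_zero h2 h2) hi0
    apply mul_left_cancel₀ h4i
    linear_combination g1 - g2
  have hlin : 2 * ((u1 - u3) - (u0 - u2)) = (u0 - u1 + u2 - u3) - 3 := by
    linear_combination 3 * g0 - 2 * hU
  have hs : (u0 - u2) ^ 2 + (u1 - u3) ^ 2 = -p := by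
    linear_combination g3 + (u1 - u3) ^ 2 * hi
  have hfin : (5 * p + 9 : L) = 2 * (3 - 4 * y) * (u0 - u1 + u2 - u3) := by
    linear_combination (-(2 * ((u1 - u3) - (u0 - u2)) + (u0 - u1 + u2 - u3) - 3)) * hlin + 4 * hs - 8 * hab - g4
  rw [hfin]
  linear_combination 4 * (3 - 4 * (y : L)) ^ 2 * g4
lemma arith (p q k : ℕ) (x y : ℤ) (hp : p.Prime) (hp8 : p % 8 = 5) (hq : q.Prime) (hq3 : 3 < q)
    (hk : q = 1 + 2 * k * p) (hk2 : k ≠ 2) (hx : x % 4 = 1) (hxy : (p : ℤ) = x ^ 2 + 4 * y ^ 2)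
    (hD : (q : ℤ) ∣ (5 * p + 9) ^ 2 - 4 * (3 - 4 * y) ^ 2 * p)
    (h4p : (q : ℤ) ∣ 4 ^ p - 1) :
    (q : ℤ) = 11 ∨ ((q : ℤ) = 1 + 2 * (p : ℤ) ∧ 3 * (p : ℤ) = 4 * (3 - 4 * y) ^ 2 + 83) := by
  have hk1 : 1 ≤ k := by
    rcases Nat.eq_zero_or_pos k with rfl | h
    · omega
    · exact h
  have hkz : (q : ℤ) = 1 + 2 * k * p := by exact_mod_cast hk
  have hq3' : (q : ℤ) % 3 ≠ 0 := by
    intro h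
    have h' : 3 ∣ q := by omega
    have := (Nat.prime_dvd_prime_iff_eq Nat.prime_three hq).mp h'
    omega
  obtain ⟨m, hm⟩ := id hD
  obtain ⟨j, hj⟩ : ∃ j : ℤ, j = 25 * p + 90 - 4 * (3 - 4 * y) ^ 2 - 2 * k * m := ⟨_, rfl⟩
  have hmj : m = 81 + p * j := by
    rw [hkz] at hm
    rw [hj]; linear_combination -hm
  have hE : j + 2 * k * (81 + p * j) = 25 * p + 90 - 4 * (3 - 4 * y) ^ 2 := by
    rw [← hmj, hj]; ring
  have h8 : (8 : ℤ) ∣ m := by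
    have hc : IsCoprime (8 : ℤ) q := by
      have : Nat.Coprime 8 q := by
        rw [show 8 = 2 ^ 3 by norm_num]
        apply Nat.Coprime.pow_left
        rw [Nat.coprime_primes Nat.prime_two hq]; omega
      exact_mod_cast Nat.isCoprime_iff_coprime.mpr this
    apply hc.dvd_of_dvd_mul_left
    rw [← hm]
    obtain ⟨r, hr⟩ : ∃ r : ℤ, (p : ℤ) = 8 * r + 5 := ⟨p / 8, by omega⟩
    rw [hr]
    exact ⟨2 * (100 * r ^ 2 + 170 * r + 72) - (4 * r * (3 - 4 * y) ^ 2) + (- 20 * (1 - 3 * y + 2 * y ^ 2)) - 2, by ring⟩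
  have hj8 : j % 8 = 3 := by
    obtain ⟨r, hr⟩ : ∃ r : ℤ, (p : ℤ) = 8 * r + 5 := ⟨p / 8, by omega⟩
    obtain ⟨c, hc⟩ := h8
    have : 8 * (c - r * j) = 81 + 5 * j := by rw [hmj, hr] at hc; linear_combination -hc
    omega
  obtain ⟨z, hz⟩ : ∃ z : ℤ, z = (3 - 4 * y) := ⟨_, rfl⟩
  have hz0 : 0 ≤ z ^ 2 := sq_nonneg z
  have hz3 : z ^ 2 % 3 = 0 ∨ z ^ 2 % 3 = 1 := by
    rw [sq, Int.mul_emod]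
    have h1 : z % 3 = 0 ∨ z % 3 = 1 ∨ z % 3 = 2 := by omega
    rcases h1 with h | h | h <;> simp [h]
  have hyodd : y % 2 = 1 := by
    by_contra hcon
    obtain ⟨s, rfl⟩ : ∃ s, y = 2 * s := ⟨y / 2, by omega⟩
    obtain ⟨t, rfl⟩ : ∃ t, x = 4 * t + 1 := ⟨x / 4, by omega⟩
    have : (p : ℤ) = 8 * (2 * t ^ 2 + t + 2 * s ^ 2) + 1 := by rw [hxy]; ring
    omega
  have hp5 : 5 ≤ p := by omega
  have hpz : (5 : ℤ) ≤ p := by exact_mod_cast hp5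
  have hkzz : (1 : ℤ) ≤ k := by exact_mod_cast hk1
  have hp3 : p % 3 ≠ 0 := by
    intro h
    have h' : 3 ∣ p := by omega
    have := (Nat.prime_dvd_prime_iff_eq Nat.prime_three hp).mp h'
    omega
  rw [← hz] at hE ⊢
  by_cases hjs : 3 ≤ j
  · have hkj : (k : ℤ) * j ≤ 12 := by
      by_contra hcon
      have : 13 ≤ (k : ℤ) * j := by omega
      nlinarith
    have hj12 : j ≤ 12 := by nlinarith
    have hjj : j = 3 ∨ j = 11 := by omega
    rcases hjj with rfl | rfl
    · have : k ≤ 4 := by omega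
      interval_cases k
      · exfalso; push_cast at *; omega
      · exact absurd rfl hk2
      · exfalso
        push_cast at *
        have hz7 : (7 : ℤ) ∣ z ^ 2 := by omega
        have hz7' : (7 : ℤ) ∣ z := by
          have h7p : Prime (7 : ℤ) := by norm_num
          exact h7p.dvd_of_dvd_pow hz7
        obtain ⟨w, hw⟩ := hz7'
        rw [hw, mul_pow] at hE
        have h7 : (7 : ℤ) ∣ q := by omega
        have h7' : 7 ∣ q := by exact_mod_cast h7
        have := (Nat.prime_dvd_prime_iff_eq (by norm_num) hq).mp h7'
        omega
      · exfalso; push_cast at *; omega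
    · have : k = 1 := by omega
      subst this
      right
      push_cast at *
      constructor
      · omega
      · linarith
  · left
    have hj5 : j ≤ -5 := by omega
    have hx1 : 1 ≤ x ^ 2 := by
      have h0 : x ≠ 0 := by omega
      have h1 := sq_nonneg x
      have h2 := pow_ne_zero 2 h0
      omega
    have hzb : 4 * z ^ 2 ≤ 18 * p + 306 := by
      rw [hz]; nlinarith [sq_nonneg (y + 6)]
    have hp21 : (p : ℤ) ≤ 21 := by
      by_contra hcon
      have h22 : (22 : ℤ) ≤ p := by omega
      have hkp : 22 * (k : ℤ) ≤ k * p := by nlinarith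
      have : (k * p : ℤ) * (j + 5) ≤ 0 := mul_nonpos_of_nonneg_of_nonpos (by positivity) (by omega)
      nlinarith
    have hpc : p = 5 ∨ p = 13 ∨ p = 21 := by omega
    have hy1 : y = 1 ∨ y = -1 ∨ y = 0 := by
      have : y ^ 2 < 2 ^ 2 ∨ p = 21 := by
        rcases hpc with rfl | rfl | rfl
        · left; push_cast at hxy; omega
        · left; push_cast at hxy; omega
        · right; rfl
      rcases this with h | rfl
      · have := abs_lt_of_sq_lt_sq h (by norm_num)
        rw [abs_lt] at this; omega
      · revert hp; norm_num
    rcases hpc with rfl | rfl | rfl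
    · have h := Int.dvd_coe_gcd hD h4p
      rcases hy1 with rfl | rfl | rfl
      · norm_num at h
        have := Int.le_of_dvd (by norm_num) h
        omega
      · norm_num at h
        have h11 : q ∣ 11 := by exact_mod_cast h
        have := (Nat.prime_dvd_prime_iff_eq hq (by norm_num)).mp h11
        omega
      · omega
    · have h := Int.dvd_coe_gcd hD h4p
      rcases hy1 with rfl | rfl | rfl
      · norm_num at h
        have := Int.le_of_dvd (by norm_num) h
        omega
      · norm_num at h
        have := Int.le_of_dvd (by norm_num) h
        omega
      · omega
    · revert hp; norm_num
theorem lemma6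
    (p : ℕ) (hp : p.Prime) (hp8 : p % 8 = 5)
    (x y : ℤ) (hx : x % 4 = 1) (hxy : (p : ℤ) = x ^ 2 + 4 * y ^ 2)
    (θ : ℕ) (hθ : IsPrimitiveRoot (θ : ZMod p) (p - 1))
    (hy : 16 * (((cycD p θ 0).filter (fun a => (a + 1) % p ∈ cycD p θ 1)).card : ℤ)
        = (p : ℤ) + 1 + 2 * x - 8 * y)
    (d : ℤ) (hd : Prime d) (hd3 : 3 < d)
    (hdvd : d ∣ (Int.gcd (eta4 p θ 2 + 2 * eta4 p θ 3 + 3 * eta4 p θ 0) (((4 : ℤ) ^ p - 1) / 3) : ℤ)) :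
    d = 11 ∨ (d = 1 + 2 * (p : ℤ) ∧ 3 * (p : ℤ) = 4 * (3 - 4 * y) ^ 2 + 83) := by

  have : Fact p.Prime := ⟨hp⟩
  have hgcd := Int.dvd_coe_gcd_iff.mp hdvd
  obtain ⟨hU, h3⟩ := hgcd
  have h4p : d ∣ (4 : ℤ) ^ p - 1 := by
    have h : (3 : ℤ) ∣ 4 ^ p - 1 := by
      have := sub_dvd_pow_sub_pow (4 : ℤ) 1 p
      simpa using this
    obtain ⟨c, hc⟩ := h
    rw [hc, Int.mul_ediv_cancel_left _ (by norm_num)] at h3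
    rw [hc]; exact Dvd.dvd.mul_left h3 3
  obtain ⟨χ, hχ, hall⟩ := exists_chi p hp8 θ hθ
  obtain ⟨X, Y, hJ, hJ3, hn, hc⟩ := key_jac hp8 hθ hχ hall
  have hY := ident hp hp8 x y X Y _ hx hxy hn hy hc
  subst hY
  obtain ⟨q, rfl⟩ : ∃ q : ℕ, d = q := ⟨d.toNat, by omega⟩
  have hq : q.Prime := Nat.prime_iff_prime_int.mpr hd
  have : Fact q.Prime := ⟨hq⟩
  have hq3 : 3 < q := by exact_mod_cast hd3
  have h4z : (4 : ZMod q) ^ p = 1 := by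
    have := (ZMod.intCast_zmod_eq_zero_iff_dvd _ q).mpr h4p
    push_cast at this
    linear_combination this
  have h4ne : (4 : ZMod q) ≠ 1 := by
    intro h
    have h' : ((3 : ℕ) : ZMod q) = 0 := by push_cast; linear_combination h
    rw [ZMod.natCast_eq_zero_iff] at h'
    have := Nat.le_of_dvd (by norm_num) h'
    omega
  have hord : orderOf (4 : ZMod q) = p := orderOf_eq_prime h4z h4ne
  have h2z : (2 : ZMod q) ≠ 0 := by
    intro h
    have h' : ((2 : ℕ) : ZMod q) = 0 := by push_cast; exact h
    rw [ZMod.natCast_eq_zero_iff] at h'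
    have := Nat.le_of_dvd (by norm_num) h'
    omega
  have h40 : (4 : ZMod q) ≠ 0 := by
    rw [show (4 : ZMod q) = 2 * 2 by norm_num]; exact mul_ne_zero h2z h2z
  have hpd : p ∣ q - 1 := hord ▸ orderOf_dvd_of_pow_eq_one (ZMod.pow_card_sub_one_eq_one h40)
  -- the congruence
  have hD : (q : ℤ) ∣ (5 * p + 9) ^ 2 - 4 * (3 - 4 * y) ^ 2 * p := by
    obtain ⟨i, hi⟩ := IsAlgClosed.exists_pow_nat_eq (-1 : AlgebraicClosure (ZMod q)) (n := 2) (by norm_num)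
    have hinj := (algebraMap (ZMod q) (AlgebraicClosure (ZMod q))).injective
    have hp4 : IsPrimitiveRoot (4 : AlgebraicClosure (ZMod q)) p := by
      have h := IsPrimitiveRoot.orderOf (4 : ZMod q)
      rw [hord] at h
      have := h.map_of_injective hinj
      rwa [map_ofNat] at this
    have h2 : (2 : AlgebraicClosure (ZMod q)) ≠ 0 := by
      intro h; apply h2z; apply hinj; rw [map_ofNat, map_zero]; exact h
    have := CharP.intCast_eq_zero_iff (AlgebraicClosure (ZMod q)) q
    exact (this _).mp (mod_d hp8 hθ hχ hall X y hJ hJ3 i (by rw [← sq, hi]) h2 hp4 ((this _).mpr hU))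
  obtain ⟨k, hk⟩ : ∃ k : ℕ, q = 1 + 2 * k * p := by
    obtain ⟨c, hc⟩ := hpd
    rcases hq.eq_two_or_odd with h | h
    · omega
    · have hev : Even (p * c) := by rw [← hc, Nat.even_iff]; omega
      have hev2 : Even c := by
        rcases Nat.even_mul.mp hev with h | h
        · rw [Nat.even_iff] at h; omega
        · exact h
      obtain ⟨k, rfl⟩ := hev2
      refine ⟨k, ?_⟩
      have : q = p * (k + k) + 1 := by omega
      rw [this]; ring
  have hk2 : k ≠ 2 := by
    rintro rfl
    have h1 : IsSquare (2 : ZMod q) := by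
      rw [ZMod.euler_criterion _ h2z, show q / 2 = 2 * p by omega, pow_mul,
        show (2 : ZMod q) ^ 2 = 4 by norm_num, h4z]
    rw [ZMod.exists_sq_eq_two_iff (by omega)] at h1
    omega
  exact arith p q k x y hp hp8 hq hq3 hk hk2 hx hxy hD h4p
end
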